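/- Let n ≥ 1 and let ψ : ℝⁿ → ℝ be a smooth function such that ψ, ψ² and |∇ψ|² are integrable with respect to the standard Gaussian probability measure γₙ on ℝⁿ. Then ∫ |∇ψ|² dγₙ ≥ ∫ ψ² dγₙ − ( ∫ ψ dγₙ )². -/

import Mathlib

open MeasureTheory

noncomputable section

/-- The standard Gaussian probability measure on `ℝⁿ`, with density
`(2π)^{-n/2} e^{-|x|²/2}` with respect to Lebesgue measure. -/
def stdGaussian (n : ℕ) : Measure (EuclideanSpace ℝ (Fin n)) :=
  volume.withDensity fun x =>
    ENNReal.ofReal ((2 * Real.pi) ^ (-(n : ℝ) / 2) * Real.exp (-‖x‖ ^ 2 / 2))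

def gV {α : Type*} [MeasurableSpace α] (f : α → ℝ) (μ : Measure α) : ℝ :=
  (∫ x, f x ^ 2 ∂μ) - (∫ x, f x ∂μ) ^ 2

lemma gV_nonneg {α : Type*} [MeasurableSpace α] (f : α → ℝ) (μ : Measure α)
    [IsProbabilityMeasure μ] (h1 : Integrable f μ) (h2 : Integrable (fun x => f x ^ 2) μ) :
    0 ≤ gV f μ := by
  unfold gV
  set m := ∫ x, f x ∂μ with hm
  have h : 0 ≤ ∫ x, (f x - m) ^ 2 ∂μ := integral_nonneg fun x => sq_nonneg _
  have e : ∫ x, (f x - m) ^ 2 ∂μ = (∫ x, f x ^ 2 ∂μ) - 2 * m * m + m ^ 2 := by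
    have : ∀ x, (f x - m) ^ 2 = f x ^ 2 - 2 * m * f x + m ^ 2 := fun x => by ring
    simp_rw [this]
    erw [integral_add (h2.sub (h1.const_mul _)) (integrable_const _),
      integral_sub h2 (h1.const_mul _), integral_const_mul, ← hm]
    simp
  nlinarith

lemma twofactor {α β : Type*} [MeasurableSpace α] [MeasurableSpace β]
    (μ : Measure α) (ν : Measure β) [IsProbabilityMeasure μ] [IsProbabilityMeasure ν]
    (ψ : α × β → ℝ) (h1 : Integrable ψ (μ.prod ν))
    (h2 : Integrable (fun p => ψ p ^ 2) (μ.prod ν)) :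
    Integrable (fun x => gV (fun y => ψ (x, y)) ν) μ ∧
    Integrable (fun y => gV (fun x => ψ (x, y)) μ) ν ∧
    gV ψ (μ.prod ν) ≤ (∫ x, gV (fun y => ψ (x, y)) ν ∂μ) + ∫ y, gV (fun x => ψ (x, y)) μ ∂ν := by
  set g : α → ℝ := fun x => ∫ y, ψ (x, y) ∂ν with hg
  set h : β → ℝ := fun y => ∫ x, ψ (x, y) ∂μ with hh
  have g1 : Integrable g μ := h1.integral_prod_left
  have k1 : Integrable h ν := h1.integral_prod_right
  have G : Integrable (fun x => ∫ y, ψ (x, y) ^ 2 ∂ν) μ := h2.integral_prod_left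
  have H : Integrable (fun y => ∫ x, ψ (x, y) ^ 2 ∂μ) ν := h2.integral_prod_right
  have g2 : Integrable (fun x => g x ^ 2) μ := by
    refine G.mono' (g1.aestronglyMeasurable.pow 2) ?_
    filter_upwards [h1.prod_right_ae, h2.prod_right_ae] with x a b
    have := gV_nonneg _ _ a b
    unfold gV at this
    simp only [Real.norm_eq_abs, abs_pow, sq_abs]
    linarith
  have k2 : Integrable (fun x => h x ^ 2) ν := by
    refine H.mono' (k1.aestronglyMeasurable.pow 2) ?_
    filter_upwards [h1.prod_left_ae, h2.prod_left_ae] with x a b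
    have := gV_nonneg _ _ a b
    unfold gV at this
    simp only [Real.norm_eq_abs, abs_pow, sq_abs]
    linarith
  have mψ : MemLp ψ 2 (μ.prod ν) := (memLp_two_iff_integrable_sq h1.aestronglyMeasurable).2 h2
  have mg : MemLp (fun p : α × β => g p.1) 2 (μ.prod ν) :=
    ((memLp_two_iff_integrable_sq g1.aestronglyMeasurable).2 g2).comp_fst ν
  have mh : MemLp (fun p : α × β => h p.2) 2 (μ.prod ν) :=
    ((memLp_two_iff_integrable_sq k1.aestronglyMeasurable).2 k2).comp_snd μ
  refine ⟨G.sub g2, H.sub k2, ?_⟩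
  have eg : ∫ p : α × β, g p.1 ∂(μ.prod ν) = ∫ p, ψ p ∂(μ.prod ν) := by
    rw [integral_prod _ h1, integral_prod _ (g1.comp_fst ν)]; simp [hg]
  have eh : ∫ p : α × β, h p.2 ∂(μ.prod ν) = ∫ p, ψ p ∂(μ.prod ν) := by
    rw [integral_prod_symm _ h1, integral_prod_symm _ (k1.comp_snd μ)]; simp [hh]
  have ig : Integrable (fun p : α × β => ψ p * g p.1) (μ.prod ν) := mψ.integrable_mul mg
  have ih : Integrable (fun p : α × β => ψ p * h p.2) (μ.prod ν) := mψ.integrable_mul mh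
  have igh : Integrable (fun p : α × β => g p.1 * h p.2) (μ.prod ν) := g1.mul_prod k1
  have ig2 : Integrable (fun p : α × β => g p.1 ^ 2) (μ.prod ν) := g2.comp_fst ν
  have ih2 : Integrable (fun p : α × β => h p.2 ^ 2) (μ.prod ν) := k2.comp_snd μ
  have E1 : ∫ p : α × β, ψ p * g p.1 ∂(μ.prod ν) = ∫ x, g x ^ 2 ∂μ := by
    rw [integral_prod _ ig]
    simp only [integral_mul_const, sq]; rfl
  have E2 : ∫ p : α × β, ψ p * h p.2 ∂(μ.prod ν) = ∫ x, h x ^ 2 ∂ν := by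
    rw [integral_prod_symm _ ih]
    simp only [integral_mul_const, sq]; rfl
  have E3 : ∫ p : α × β, g p.1 * h p.2 ∂(μ.prod ν) = (∫ p, ψ p ∂(μ.prod ν)) ^ 2 := by
    rw [integral_prod_mul, sq]
    congr 1
    · rw [← eg, integral_fun_fst]; simp
    · rw [← eh, integral_fun_snd]; simp
  have E4 : ∫ p : α × β, g p.1 ^ 2 ∂(μ.prod ν) = ∫ x, g x ^ 2 ∂μ := by
    rw [integral_fun_fst (fun x => g x ^ 2)]; simp
  have E5 : ∫ p : α × β, h p.2 ^ 2 ∂(μ.prod ν) = ∫ x, h x ^ 2 ∂ν := by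
    rw [integral_fun_snd (fun x => h x ^ 2)]; simp
  have L1 : ∫ x, gV (fun y => ψ (x, y)) ν ∂μ = (∫ p, ψ p ^ 2 ∂(μ.prod ν)) - ∫ x, g x ^ 2 ∂μ := by
    rw [integral_prod _ h2, ← integral_sub G g2]; rfl
  have L2 : ∫ y, gV (fun x => ψ (x, y)) μ ∂ν = (∫ p, ψ p ^ 2 ∂(μ.prod ν)) - ∫ x, h x ^ 2 ∂ν := by
    rw [integral_prod_symm _ h2, ← integral_sub H k2]; rfl
  have q1 : Integrable (fun p : α × β => ψ p - g p.1 - h p.2) (μ.prod ν) :=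
    (h1.sub (g1.comp_fst ν)).sub (k1.comp_snd μ)
  have qe : ∀ p : α × β, (ψ p - g p.1 - h p.2) ^ 2 =
    ψ p ^ 2 + g p.1 ^ 2 + h p.2 ^ 2 - 2 * (ψ p * g p.1) - 2 * (ψ p * h p.2)
      + 2 * (g p.1 * h p.2) := fun p => by ring
  have i1 := h2.add ig2
  have i2 := i1.add ih2
  have i3 := i2.sub (ig.const_mul 2)
  have i4 := i3.sub (ih.const_mul 2)
  have i5 := i4.add (igh.const_mul 2)
  have q2 : Integrable (fun p : α × β => (ψ p - g p.1 - h p.2) ^ 2) (μ.prod ν) := by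
    simp_rw [qe]; exact i5
  have Q := gV_nonneg _ _ q1 q2
  unfold gV at Q
  simp_rw [qe] at Q
  erw [integral_add i4 (igh.const_mul 2), integral_sub i3 (ih.const_mul 2), 
    integral_sub i2 (ig.const_mul 2), integral_add i1 ih2, integral_add h2 ig2,
    integral_const_mul, integral_const_mul, integral_const_mul,
    integral_sub (h1.sub (g1.comp_fst ν)) (k1.comp_snd μ), integral_sub h1 (g1.comp_fst ν),
    eg, eh, E1, E2, E3, E4, E5] at Q
  rw [L1, L2]
  unfold gV
  nlinarith

abbrev gm : Measure ℝ := ProbabilityTheory.gaussianReal 0 1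
abbrev gd : ℝ → ℝ := ProbabilityTheory.gaussianPDFReal 0 1

lemma gd_eq (t : ℝ) : gd t = (√(2 * Real.pi))⁻¹ * Real.exp (-t ^ 2 / 2) := by
  simp [gd, ProbabilityTheory.gaussianPDFReal]

lemma gd_deriv (t : ℝ) : HasDerivAt (fun x => - gd x) (gd t * t) t := by
  have : HasDerivAt (fun x : ℝ => -((√(2 * Real.pi))⁻¹ * Real.exp (-x ^ 2 / 2)))
      (-((√(2 * Real.pi))⁻¹ * (Real.exp (-t ^ 2 / 2) * (-(2 * t) / 2)))) t := by
    have h : HasDerivAt (fun x : ℝ => -x ^ 2 / 2) (-(2 * t) / 2) t := by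
      have := ((hasDerivAt_pow 2 t).neg).div_const 2
      simpa using this
    exact (h.exp.const_mul _).neg
  simp_rw [gd_eq]
  convert this using 1
  ring

lemma gd_tendsto : Filter.Tendsto (fun x => - gd x) Filter.atTop (nhds 0) := by
  simp_rw [gd_eq]
  have : Filter.Tendsto (fun x : ℝ => Real.exp (-x ^ 2 / 2)) Filter.atTop (nhds 0) := by
    refine Real.tendsto_exp_atBot.comp ?_
    have h : Filter.Tendsto (fun x : ℝ => x ^ 2 / 2) Filter.atTop Filter.atTop :=
      (Filter.tendsto_pow_atTop two_ne_zero).atTop_div_const (by norm_num)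
    refine (Filter.tendsto_neg_atTop_atBot.comp h).congr fun x => ?_
    simp; ring
  simpa using (this.const_mul ((√(2 * Real.pi))⁻¹)).neg

lemma gid : Integrable (fun x : ℝ => x) gm :=
  (ProbabilityTheory.memLp_id_gaussianReal (μ := 0) (v := 1) 1).integrable (by simp)

lemma gd_id : Integrable (fun x : ℝ => gd x * x) := by
  have := gid
  rw [gm, ProbabilityTheory.gaussianReal_of_var_ne_zero _ one_ne_zero,
    integrable_withDensity_iff_integrable_smul' (ProbabilityTheory.measurable_gaussianPDF 0 1)
    (by simp [ProbabilityTheory.gaussianPDF])] at this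
  simpa using this

lemma I1 (t : ℝ) : ∫ y, (if t ≤ y then y else 0) ∂gm = gd t := by
  rw [gm, ProbabilityTheory.integral_gaussianReal_eq_integral_smul one_ne_zero]
  have : ∀ y : ℝ, ProbabilityTheory.gaussianPDFReal 0 1 y • (if t ≤ y then y else 0) =
    (Set.Ici t).indicator (fun y => gd y * y) y := by
    intro y
    simp [Set.indicator_apply]
  simp_rw [this]
  rw [integral_indicator measurableSet_Ici, integral_Ici_eq_integral_Ioi,
    integral_Ioi_of_hasDerivAt_of_tendsto' (fun x _ => gd_deriv x) gd_id.integrableOn gd_tendsto]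
  simp

lemma i1 (t : ℝ) : Integrable (fun y : ℝ => (if t ≤ y then y else 0)) gm := by
  have : (fun y : ℝ => (if t ≤ y then y else 0)) = (Set.Ici t).indicator (fun y => y) := by
    ext y; simp [Set.indicator_apply]
  rw [this]; exact gid.indicator measurableSet_Ici

lemma i2 (t : ℝ) : Integrable (fun y : ℝ => (if y < t then y else 0)) gm := by
  have : (fun y : ℝ => (if y < t then y else 0)) = (Set.Iio t).indicator (fun y => y) := by
    ext y; simp [Set.indicator_apply]
  rw [this]; exact gid.indicator measurableSet_Iio

lemma i3 (t : ℝ) : Integrable (fun y : ℝ => (if t ≤ y then (1:ℝ) else 0)) gm := by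
  have : (fun y : ℝ => (if t ≤ y then (1:ℝ) else 0)) = (Set.Ici t).indicator (fun y => 1) := by
    ext y; simp [Set.indicator_apply]
  rw [this]; exact (integrable_const _).indicator measurableSet_Ici

lemma i4 (t : ℝ) : Integrable (fun y : ℝ => (if y < t then (1:ℝ) else 0)) gm := by
  have : (fun y : ℝ => (if y < t then (1:ℝ) else 0)) = (Set.Iio t).indicator (fun y => 1) := by
    ext y; simp [Set.indicator_apply]
  rw [this]; exact (integrable_const _).indicator measurableSet_Iio

lemma I2 (t : ℝ) : ∫ y, (if y < t then y else 0) ∂gm = - gd t := by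
  have h : (∫ y, (if t ≤ y then y else 0) ∂gm) + ∫ y, (if y < t then y else 0) ∂gm = 0 := by
    rw [← integral_add (i1 t) (i2 t)]
    have : ∀ y : ℝ, ((if t ≤ y then y else 0) + if y < t then y else 0) = y := by
      intro y; split_ifs <;> linarith
    simp_rw [this]
    simp [gm]
  rw [I1] at h; linarith

lemma I34 (t : ℝ) : (∫ y, (if t ≤ y then (1:ℝ) else 0) ∂gm) + ∫ y, (if y < t then (1:ℝ) else 0) ∂gm = 1 := by
  rw [← integral_add (i3 t) (i4 t)]
  have : ∀ y : ℝ, ((if t ≤ y then (1:ℝ) else 0) + if y < t then (1:ℝ) else 0) = 1 := by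
    intro y; split_ifs <;> linarith
  simp_rw [this]
  simp

/-- the kernel -/
def ka (t : ℝ) (p : ℝ × ℝ) : ℝ := if p.1 < t ∧ t ≤ p.2 then p.2 - p.1 else 0

lemma ka_nonneg (t p) : 0 ≤ ka t p := by
  unfold ka; split_ifs with h <;> linarith

lemma ka_eq (t : ℝ) (p : ℝ × ℝ) : ka t p = 
    (if p.1 < t then (1:ℝ) else 0) * (if t ≤ p.2 then p.2 else 0) -
    (if p.1 < t then p.1 else 0) * (if t ≤ p.2 then 1 else 0) := by
  unfold ka
  by_cases h : p.1 < t <;> by_cases h' : t ≤ p.2 <;> simp [h, h']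

lemma ka_int (t : ℝ) : Integrable (ka t) (gm.prod gm) := by
  have : ka t = _ := funext (ka_eq t)
  rw [this]
  exact ((i4 t).mul_prod (i1 t)).sub ((i2 t).mul_prod (i3 t))

lemma ka_integral (t : ℝ) : ∫ p, ka t p ∂(gm.prod gm) = gd t := by
  simp_rw [ka_eq]
  rw [integral_sub ((i4 t).mul_prod (i1 t)) ((i2 t).mul_prod (i3 t)),
    integral_prod_mul (fun x : ℝ => if x < t then (1:ℝ) else 0) (fun y : ℝ => if t ≤ y then y else 0),
    integral_prod_mul (fun x : ℝ => if x < t then x else 0) (fun y : ℝ => if t ≤ y then (1:ℝ) else 0), I1, I2]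
  linear_combination gd t * I34 t

lemma ka_lint (t : ℝ) : ∫⁻ p, ENNReal.ofReal (ka t p) ∂(gm.prod gm) = ENNReal.ofReal (gd t) := by
  rw [← ofReal_integral_eq_lintegral_ofReal (ka_int t) (Filter.Eventually.of_forall (ka_nonneg t)),
    ka_integral]

lemma ka_meas : Measurable (fun z : ℝ × (ℝ × ℝ) => ka z.1 z.2) := by
  unfold ka
  refine Measurable.ite ?_ (by fun_prop) (by fun_prop)
  have h1 : Measurable (fun z : ℝ × (ℝ × ℝ) => z.2.1) := by fun_prop
  have h2 : Measurable (fun z : ℝ × (ℝ × ℝ) => z.2.2) := by fun_prop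
  exact (measurableSet_lt h1 measurable_fst).inter (measurableSet_le measurable_fst h2)

lemma cs (f : ℝ → ℝ) (hf : ContDiff ℝ 1 f) {x y : ℝ} (hxy : x < y) :
    (f y - f x) ^ 2 ≤ (y - x) * ∫ t in x..y, deriv f t ^ 2 := by
  have hc : Continuous (deriv f) := hf.continuous_deriv le_rfl
  have hi : ∫ t in x..y, deriv f t = f y - f x :=
    intervalIntegral.integral_deriv_eq_sub
      (fun t _ => (hf.differentiable one_ne_zero).differentiableAt) (hc.intervalIntegrable _ _)
  set c := (f y - f x) / (y - x) with hcdef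
  have hcc : f y - f x = c * (y - x) := by
    rw [hcdef]; field_simp [sub_ne_zero.2 hxy.ne']
  have h0 : 0 ≤ ∫ t in x..y, (deriv f t - c) ^ 2 :=
    intervalIntegral.integral_nonneg hxy.le fun t _ => sq_nonneg _
  have e : ∫ t in x..y, (deriv f t - c) ^ 2 =
      (∫ t in x..y, deriv f t ^ 2) - 2 * c * (f y - f x) + (y - x) * c ^ 2 := by
    have : ∀ t, (deriv f t - c) ^ 2 = deriv f t ^ 2 - 2 * c * deriv f t + c ^ 2 := fun t => by ring
    simp_rw [this]
    rw [intervalIntegral.integral_add, intervalIntegral.integral_sub,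
      intervalIntegral.integral_const_mul, hi]
    · simp
    all_goals apply Continuous.intervalIntegrable; fun_prop
  rw [e, hcc] at h0
  rw [hcc]
  nlinarith [mul_nonneg (sub_pos.2 hxy).le h0]

lemma pw (f : ℝ → ℝ) (hf : ContDiff ℝ 1 f) {x y : ℝ} (hxy : x < y) :
    ENNReal.ofReal ((f y - f x) ^ 2) ≤
      ∫⁻ t, ENNReal.ofReal (deriv f t ^ 2) * ENNReal.ofReal (ka t (x, y)) := by
  have hc : Continuous (deriv f) := hf.continuous_deriv le_rfl
  have hd : 0 ≤ y - x := (sub_pos.2 hxy).le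
  refine (ENNReal.ofReal_le_ofReal (cs f hf hxy)).trans ?_
  have hi : Integrable (fun t => deriv f t ^ 2) (volume.restrict (Set.Ioc x y)) :=
    (hc.pow 2).integrableOn_Ioc
  rw [ENNReal.ofReal_mul hd, intervalIntegral.integral_of_le hxy.le,
    ofReal_integral_eq_lintegral_ofReal hi (Filter.Eventually.of_forall fun t => sq_nonneg _),
    ← lintegral_const_mul _ (by fun_prop), ← lintegral_indicator measurableSet_Ioc]
  refine lintegral_mono fun t => ?_
  by_cases h : t ∈ Set.Ioc x y
  · rw [Set.indicator_of_mem h]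
    simp only [ka, if_pos (show x < t ∧ t ≤ y from h), mul_comm]
    exact le_rfl
  · rw [Set.indicator_of_notMem h]; simp

lemma pw2 (f : ℝ → ℝ) (hf : ContDiff ℝ 1 f) (p : ℝ × ℝ) :
    ENNReal.ofReal ((f p.1 - f p.2) ^ 2) ≤
      (∫⁻ t, ENNReal.ofReal (deriv f t ^ 2) * ENNReal.ofReal (ka t p)) + 
      ∫⁻ t, ENNReal.ofReal (deriv f t ^ 2) * ENNReal.ofReal (ka t p.swap) := by
  obtain ⟨x, y⟩ := p
  rcases lt_trichotomy x y with h | h | h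
  · refine le_trans ?_ le_self_add
    rw [show (f (x, y).1 - f (x, y).2) ^ 2 = (f y - f x) ^ 2 by simp only; ring]
    exact pw f hf h
  · simp [h]
  · refine le_trans ?_ le_add_self
    exact pw f hf h

lemma oneD_aux (f : ℝ → ℝ) (hf : ContDiff ℝ 1 f) :
    ∫⁻ p : ℝ × ℝ, (∫⁻ t, ENNReal.ofReal (deriv f t ^ 2) * ENNReal.ofReal (ka t p)) ∂(gm.prod gm) = 
    ∫⁻ t, ENNReal.ofReal (deriv f t ^ 2) ∂gm := by
  have hc : Continuous (deriv f) := hf.continuous_deriv le_rfl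
  have hk := ka_meas
  have hk' : ∀ t, Measurable (fun p => ka t p) := fun t => hk.comp (measurable_prodMk_left)
  have hm : Measurable (fun z : (ℝ × ℝ) × ℝ => 
    ENNReal.ofReal (deriv f z.2 ^ 2) * ENNReal.ofReal (ka z.2 z.1)) := by
    have : Measurable (fun z : (ℝ × ℝ) × ℝ => ka z.2 z.1) := hk.comp measurable_swap
    fun_prop
  rw [lintegral_lintegral_swap hm.aemeasurable]
  have : ∀ t, ∫⁻ p, ENNReal.ofReal (deriv f t ^ 2) * ENNReal.ofReal (ka t p) ∂(gm.prod gm) =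
      ENNReal.ofReal (deriv f t ^ 2) * ENNReal.ofReal (gd t) := by
    intro t
    rw [lintegral_const_mul _ (hk' t).ennreal_ofReal, ka_lint]
  simp_rw [this]
  rw [gm, ProbabilityTheory.gaussianReal_of_var_ne_zero _ one_ne_zero,
    lintegral_withDensity_eq_lintegral_mul _ (ProbabilityTheory.measurable_gaussianPDF 0 1) 
      (by fun_prop)]
  refine lintegral_congr fun t => ?_
  simp [ProbabilityTheory.gaussianPDF, mul_comm]

lemma oneD (f : ℝ → ℝ) (hf : ContDiff ℝ 1 f) (h1 : Integrable f gm)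
    (h2 : Integrable (fun x => f x ^ 2) gm) :
    ENNReal.ofReal (gV f gm) ≤ ∫⁻ t, ENNReal.ofReal (deriv f t ^ 2) ∂gm := by
  have hk := ka_meas
  have hc : Continuous (deriv f) := hf.continuous_deriv le_rfl
  have a1 : Integrable (fun p : ℝ × ℝ => f p.1 ^ 2) (gm.prod gm) := h2.comp_fst gm
  have a2 : Integrable (fun p : ℝ × ℝ => f p.2 ^ 2) (gm.prod gm) := h2.comp_snd gm
  have a3 : Integrable (fun p : ℝ × ℝ => f p.1 * f p.2) (gm.prod gm) := h1.mul_prod h1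
  have ee : ∀ p : ℝ × ℝ, (f p.1 - f p.2) ^ 2 = f p.1 ^ 2 + f p.2 ^ 2 - 2 * (f p.1 * f p.2) :=
    fun p => by ring
  have ai : Integrable (fun p : ℝ × ℝ => (f p.1 - f p.2) ^ 2) (gm.prod gm) := by
    simp_rw [ee]; exact (a1.add a2).sub (a3.const_mul 2)
  have E : ∫ p : ℝ × ℝ, (f p.1 - f p.2) ^ 2 ∂(gm.prod gm) = 2 * gV f gm := by
    simp_rw [ee]
    erw [integral_sub (a1.add a2) (a3.const_mul 2), integral_add a1 a2]
    rw [integral_const_mul, integral_prod_mul, integral_fun_fst (fun x => f x ^ 2),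
      integral_fun_snd (fun x => f x ^ 2)]
    simp [gV]; ring
  have F : ENNReal.ofReal (2 * gV f gm) ≤ 2 * ∫⁻ t, ENNReal.ofReal (deriv f t ^ 2) ∂gm := by
    rw [← E, ofReal_integral_eq_lintegral_ofReal ai (Filter.Eventually.of_forall fun p => sq_nonneg _)]
    refine (lintegral_mono (pw2 f hf)).trans ?_
    have hm : Measurable (fun p : ℝ × ℝ => 
        ∫⁻ t, ENNReal.ofReal (deriv f t ^ 2) * ENNReal.ofReal (ka t p)) := by
      apply Measurable.lintegral_prod_right'
        (f := fun z : (ℝ × ℝ) × ℝ => ENNReal.ofReal (deriv f z.2 ^ 2) * ENNReal.ofReal (ka z.2 z.1))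
      have : Measurable (fun z : (ℝ × ℝ) × ℝ => ka z.2 z.1) := hk.comp measurable_swap
      fun_prop
    rw [lintegral_add_left hm, lintegral_prod_swap (μ := gm) (ν := gm) (fun p : ℝ × ℝ => 
        ∫⁻ t, ENNReal.ofReal (deriv f t ^ 2) * ENNReal.ofReal (ka t p)), oneD_aux f hf, two_mul]
  rw [ENNReal.ofReal_mul (by norm_num), ENNReal.ofReal_ofNat] at F
  exact (ENNReal.mul_le_mul_iff_right (by norm_num) (by norm_num)).1 F

lemma pi_dens (n : ℕ) : Measure.pi (fun _ : Fin n => ProbabilityTheory.gaussianReal 0 1) =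
    (volume : Measure (Fin n → ℝ)).withDensity
      (fun x => ENNReal.ofReal (∏ i, ProbabilityTheory.gaussianPDFReal 0 1 (x i))) := by
  refine Measure.pi_eq fun s hs => ?_
  rw [withDensity_apply _ (MeasurableSet.univ_pi hs), ← lintegral_indicator (MeasurableSet.univ_pi hs)]
  have e : ∀ x : Fin n → ℝ, (Set.univ.pi s).indicator
      (fun x => ENNReal.ofReal (∏ i, ProbabilityTheory.gaussianPDFReal 0 1 (x i))) x =
      ENNReal.ofReal (∏ i, (s i).indicator (ProbabilityTheory.gaussianPDFReal 0 1) (x i)) := by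
    intro x
    by_cases hx : x ∈ Set.univ.pi s
    · rw [Set.indicator_of_mem hx]
      congr 1
      refine Finset.prod_congr rfl fun i _ => ?_
      rw [Set.indicator_of_mem (hx i trivial)]
    · rw [Set.indicator_of_notMem hx]
      simp only [Set.mem_pi, not_forall] at hx
      obtain ⟨i, _, hi⟩ := hx
      rw [Finset.prod_eq_zero (Finset.mem_univ i)]
      · simp
      · exact Set.indicator_of_notMem hi _
  have ii : ∀ i, Integrable ((s i).indicator (ProbabilityTheory.gaussianPDFReal 0 1)) :=
    fun i => (ProbabilityTheory.integrable_gaussianPDFReal 0 1).indicator (hs i)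
  have nn : ∀ i x, 0 ≤ (s i).indicator (ProbabilityTheory.gaussianPDFReal 0 1) x :=
    fun i x => Set.indicator_nonneg (fun x _ => ProbabilityTheory.gaussianPDFReal_nonneg 0 1 x) x
  simp_rw [e]
  rw [volume_pi, ← ofReal_integral_eq_lintegral_ofReal (Integrable.fintype_prod_dep ii)
    (Filter.Eventually.of_forall fun x => Finset.prod_nonneg fun i _ => nn i _),
    integral_fintype_prod_eq_prod, ENNReal.ofReal_prod_of_nonneg
      (fun i _ => integral_nonneg (nn i))]
  refine Finset.prod_congr rfl fun i _ => ?_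
  rw [ProbabilityTheory.gaussianReal_apply_eq_integral 0 one_ne_zero, integral_indicator (hs i)]

lemma mp_std (n : ℕ) : MeasurePreserving (@WithLp.toLp 2 (Fin n → ℝ))
    (Measure.pi (fun _ : Fin n => ProbabilityTheory.gaussianReal 0 1)) (stdGaussian n) := by
  refine ⟨by fun_prop, ?_⟩
  ext s hs
  rw [Measure.map_apply (by fun_prop) hs, pi_dens, stdGaussian, withDensity_apply _ hs,
    withDensity_apply _ (hs.preimage (by fun_prop)), ← (PiLp.volume_preserving_toLp (Fin n)).setLIntegral_comp_preimage hs (by fun_prop)]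
  congr 1
  funext x
  congr 1
  simp only [ProbabilityTheory.gaussianPDFReal, EuclideanSpace.norm_sq_eq]
  rw [Finset.prod_mul_distrib, ← Real.exp_sum]
  congr 1
  · have h0 : (0:ℝ) ≤ 2 * Real.pi := by positivity
    simp only [NNReal.coe_one, mul_one, Finset.prod_const, Finset.card_univ, Fintype.card_fin]
    rw [Real.sqrt_eq_rpow, ← Real.rpow_neg h0, ← Real.rpow_natCast, ← Real.rpow_mul h0]
    congr 1
    ring
  · congr 1
    simp [← Finset.sum_div]


lemma ptn (n : ℕ) : ∀ ψ : (Fin n → ℝ) → ℝ, ContDiff ℝ 1 ψ →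
    Integrable ψ (Measure.pi (fun _ : Fin n => gm)) →
    Integrable (fun x => ψ x ^ 2) (Measure.pi (fun _ : Fin n => gm)) →
    ENNReal.ofReal (gV ψ (Measure.pi (fun _ : Fin n => gm))) ≤
      ∫⁻ x, ∑ i, ENNReal.ofReal (lineDeriv ℝ ψ x (Pi.single i 1) ^ 2)
        ∂(Measure.pi (fun _ : Fin n => gm)) := by
  induction n with
  | zero =>
    intro ψ _ _ _
    have : ψ = fun _ => ψ 0 := by
      ext x; rw [Subsingleton.elim x 0]
    rw [this]
    simp [gV]
  | succ n ih =>
    intro ψ hψ h1 h2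
    set P := Measure.pi (fun _ : Fin n => gm) with hP
    have mp := (measurePreserving_piFinSuccAbove (fun _ : Fin (n + 1) => gm) 0).symm
    set e := (MeasurableEquiv.piFinSuccAbove (fun _ : Fin (n + 1) => ℝ) 0).symm with he
    have ee : ∀ a y, e (a, y) = Fin.cons a y := by
      intro a y
      simp [he, MeasurableEquiv.piFinSuccAbove, Fin.insertNthEquiv]
    have h1' : Integrable (fun p => ψ (e p)) (gm.prod P) := mp.integrable_comp_of_integrable h1
    have h2' : Integrable (fun p => ψ (e p) ^ 2) (gm.prod P) := mp.integrable_comp_of_integrable h2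
    have hV : gV ψ (Measure.pi (fun _ : Fin (n + 1) => gm)) = gV (fun p => ψ (e p)) (gm.prod P) := by
      unfold gV
      rw [← mp.integral_comp' (fun x => ψ x ^ 2), ← mp.integral_comp' ψ]
    obtain ⟨j1, j2, j3⟩ := twofactor gm P _ h1' h2'
    have hmeas : ∀ i : Fin (n + 1), Measurable fun x =>
        ENNReal.ofReal (lineDeriv ℝ ψ x (Pi.single i 1) ^ 2) := fun i =>
      ((measurable_lineDeriv hψ.continuous).pow_const 2).ennreal_ofReal
    have hR : ∫⁻ x, ∑ i, ENNReal.ofReal (lineDeriv ℝ ψ x (Pi.single i 1) ^ 2)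
        ∂(Measure.pi (fun _ : Fin (n + 1) => gm)) =
        (∫⁻ p, ENNReal.ofReal (lineDeriv ℝ ψ (e p) (Pi.single 0 1) ^ 2) ∂(gm.prod P)) +
        ∫⁻ p, ∑ i : Fin n, ENNReal.ofReal (lineDeriv ℝ ψ (e p) (Pi.single i.succ 1) ^ 2)
          ∂(gm.prod P) := by
      rw [← mp.lintegral_comp (Finset.measurable_sum _ fun i _ => hmeas i)]
      simp_rw [Fin.sum_univ_succ]
      exact lintegral_add_left ((hmeas 0).comp e.measurable) _
    have hm0 : Measurable fun p => ENNReal.ofReal (lineDeriv ℝ ψ (e p) (Pi.single 0 1) ^ 2) :=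
      (hmeas 0).comp e.measurable
    have hm1 : Measurable fun p =>
        ∑ i : Fin n, ENNReal.ofReal (lineDeriv ℝ ψ (e p) (Pi.single i.succ 1) ^ 2) :=
      Finset.measurable_sum _ fun i _ => (hmeas i.succ).comp e.measurable
    rw [hV, hR]
    refine (ENNReal.ofReal_le_ofReal j3).trans (ENNReal.ofReal_add_le.trans ?_)
    rw [add_comm]
    have nn1 : ∀ᵐ x ∂gm, 0 ≤ gV (fun y => ψ (e (x, y))) P := by
      filter_upwards [h1'.prod_right_ae, h2'.prod_right_ae] with x a b
      exact gV_nonneg _ _ a b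
    have nn2 : ∀ᵐ y ∂P, 0 ≤ gV (fun x => ψ (e (x, y))) gm := by
      filter_upwards [h1'.prod_left_ae, h2'.prod_left_ae] with x a b
      exact gV_nonneg _ _ a b
    refine add_le_add ?_ ?_
    · rw [ofReal_integral_eq_lintegral_ofReal j2 nn2, lintegral_prod_symm _ hm0.aemeasurable]
      refine lintegral_mono_ae ?_
      filter_upwards [h1'.prod_left_ae, h2'.prod_left_ae] with y a b
      have hc : ContDiff ℝ 1 (fun x => ψ (e (x, y))) := by
        refine hψ.comp (contDiff_pi.2 fun i => ?_)
        simp_rw [ee]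
        refine Fin.cases ?_ (fun j => ?_) i
        · simpa using contDiff_fun_id
        · simpa using contDiff_const
      refine (oneD _ hc a b).trans (le_of_eq (lintegral_congr fun x => ?_))
      congr 2
      rw [lineDeriv, ee]
      have : (fun t : ℝ => ψ (Fin.cons x y + t • Pi.single 0 1)) =
          fun t => (fun x => ψ (e (x, y))) (x + t) := by
        funext t
        simp only [ee]
        congr 1
        ext i
        refine Fin.cases ?_ (fun j => ?_) i <;> simp
      rw [this, deriv_comp_const_add (f := fun x => ψ (e (x, y)))]
      simp
    · rw [ofReal_integral_eq_lintegral_ofReal j1 nn1, lintegral_prod _ hm1.aemeasurable]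
      refine lintegral_mono_ae ?_
      filter_upwards [h1'.prod_right_ae, h2'.prod_right_ae] with x a b
      have hc : ContDiff ℝ 1 (fun y => ψ (e (x, y))) := by
        refine hψ.comp (contDiff_pi.2 fun i => ?_)
        simp_rw [ee]
        refine Fin.cases ?_ (fun j => ?_) i
        · simpa using contDiff_const
        · simpa using contDiff_apply ℝ ℝ j
      refine (ih _ hc a b).trans (le_of_eq (lintegral_congr fun y => ?_))
      refine Finset.sum_congr rfl fun j _ => ?_
      congr 2
      rw [lineDeriv, lineDeriv]
      congr 1
      funext t
      simp only [ee]
      congr 1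
      ext i
      refine Fin.cases ?_ (fun k => ?_) i <;> simp [Pi.single_apply]

theorem stmt_18 {n : ℕ} (hn : 1 ≤ n)
    (ψ : EuclideanSpace ℝ (Fin n) → ℝ) (hsmooth : ContDiff ℝ (⊤ : ℕ∞) ψ)
    (h1 : Integrable ψ (stdGaussian n))
    (h2 : Integrable (fun x => ψ x ^ 2) (stdGaussian n))
    (h3 : Integrable (fun x => ‖gradient ψ x‖ ^ 2) (stdGaussian n)) :
    (∫ x, ψ x ^ 2 ∂stdGaussian n) - (∫ x, ψ x ∂stdGaussian n) ^ 2 ≤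
      ∫ x, ‖gradient ψ x‖ ^ 2 ∂stdGaussian n := by
  have mp := mp_std n
  have emb : MeasurableEmbedding (@WithLp.toLp 2 (Fin n → ℝ)) :=
    (MeasurableEquiv.toLp 2 (Fin n → ℝ)).measurableEmbedding
  rw [← mp.integral_comp emb, ← mp.integral_comp emb, ← mp.integral_comp emb]
  have k1 := mp.integrable_comp_of_integrable h1
  have k2 := mp.integrable_comp_of_integrable h2
  have k3 : Integrable (fun x : Fin n → ℝ => ‖gradient ψ (WithLp.toLp 2 x)‖ ^ 2)
      (Measure.pi fun _ => ProbabilityTheory.gaussianReal 0 1) := mp.integrable_comp_of_integrable h3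
  have hs1 : ContDiff ℝ 1 ψ := hsmooth.of_le (by exact_mod_cast le_top)
  have hc : ContDiff ℝ 1 (fun x : Fin n → ℝ => ψ (WithLp.toLp 2 x)) :=
    hs1.comp (PiLp.contDiff_toLp)
  have key := ptn n _ hc k1 k2
  have nn : ∀ x : Fin n → ℝ, 0 ≤ ‖gradient ψ (WithLp.toLp 2 x)‖ ^ 2 := fun x => sq_nonneg _
  rw [← ENNReal.ofReal_le_ofReal_iff (integral_nonneg nn),
    ofReal_integral_eq_lintegral_ofReal k3 (Filter.Eventually.of_forall nn)]
  refine key.trans (le_of_eq (lintegral_congr fun x => ?_))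
  rw [← ENNReal.ofReal_sum_of_nonneg (fun i _ => sq_nonneg _)]
  congr 1
  rw [← (EuclideanSpace.basisFun (Fin n) ℝ).sum_sq_norm_inner_right]
  refine Finset.sum_congr rfl fun i _ => ?_
  rw [Real.norm_eq_abs, sq_abs]
  congr 1
  have hd : DifferentiableAt ℝ ψ (WithLp.toLp 2 x) :=
    (hs1.differentiable one_ne_zero).differentiableAt
  rw [real_inner_comm, gradient, InnerProductSpace.toDual_symm_apply, ← hd.lineDeriv_eq_fderiv,
    lineDeriv, lineDeriv]
  congr 1
  funext t
  congr 1
  ext j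
  simp [Pi.single_apply]
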